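/- In the deconvolution setting with data f = K*g and κ ≤ l_min/6: for every u_0 ∈ PC[0,1] there exists u_1 ∈ PC[0,1] which has no jump in the union ∪_i N_i and satisfies P_γ(u_1) ≤ P_γ(u_0). Consequently, min_{u ∈ PC[0,1]} P_γ(u) = min { P_γ(u) : u ∈ PC[0,1], all jump locations of u lie in ∪_i J_i }. -/

import Mathlib

open MeasureTheory Filter Set
open scoped ENNReal Classical

noncomputable section

/-- The Lebesgue measure restricted to `[0,1]`. -/
def mu01 : Measure ℝ := volume.restrict (Set.Icc (0:ℝ) 1)

/-- The step function determined by partition points `x` and values `a`. -/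
def stepF {m : ℕ} (x : Fin (m + 1) → ℝ) (a : Fin m → ℝ) : ℝ → ℝ := fun t =>
  ∑ l : Fin m, Set.indicator (Set.Ioo (x l.castSucc) (x l.succ)) (fun _ => a l) t

/-- `u` is a.e. on `[0,1]` represented by the step function with partition `x` and values `a`. -/
def IsPCRep (u : ℝ → ℝ) {m : ℕ} (x : Fin (m + 1) → ℝ) (a : Fin m → ℝ) : Prop :=
  StrictMono x ∧ x 0 = 0 ∧ x (Fin.last m) = 1 ∧ ∀ᵐ t ∂mu01, u t = stepF x a t

/-- `u` is piecewise constant on `[0,1]` (up to a.e. equality). -/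
def IsPC (u : ℝ → ℝ) : Prop :=
  ∃ (m : ℕ) (x : Fin (m + 1) → ℝ) (a : Fin m → ℝ), IsPCRep u x a

/-- The number of jumps `J(u)`: the minimal number of interior partition points over all
piecewise constant representations of `u`. -/
def jumps (u : ℝ → ℝ) : ℕ :=
  sInf {jj : ℕ | ∃ (x : Fin (jj + 2) → ℝ) (a : Fin (jj + 1) → ℝ), IsPCRep u x a}

/-- `u` is piecewise constant with all jump locations inside `S`. -/
def IsPCIn (u : ℝ → ℝ) (S : Set ℝ) : Prop :=
  ∃ (m : ℕ) (x : Fin (m + 1) → ℝ) (a : Fin m → ℝ), IsPCRep u x a ∧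
    ∀ i : Fin (m + 1), i ≠ 0 → i ≠ Fin.last m → x i ∈ S

/-- The `L¹[0,1]` distance of two functions. -/
def L1dist (u v : ℝ → ℝ) : ℝ := ∫ t, |u t - v t| ∂mu01

/-- The continuous `L¹`-Potts functional `P_γ` with data `f`. -/
def Potts (γ : ℝ) (f u : ℝ → ℝ) : ℝ≥0∞ :=
  if IsPC u then ENNReal.ofReal (γ * (jumps u : ℝ) + L1dist u f) else ⊤

/-- The (semi-)discrete `L¹`-Potts functional with data `f`, restricted to piecewise
constant functions whose jumps lie in `S`. -/
def PottsIn (γ : ℝ) (f : ℝ → ℝ) (S : Set ℝ) (u : ℝ → ℝ) : ℝ≥0∞ :=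
  if IsPCIn u S then ENNReal.ofReal (γ * (jumps u : ℝ) + L1dist u f) else ⊤

/-- Convolution `(K*g)(t) = ∫ K(s)·g(t−s) ds`. -/
def convK (K g : ℝ → ℝ) : ℝ → ℝ := fun t => ∫ s, K s * g (t - s)

/-- The piecewise constant function on `ℝ` with jump locations `j` and values `α`
(extended constantly outside the jump region): at `t`, its value is `α i` where `i`
is the number of jump locations strictly below `t`. -/
def stepOn {n : ℕ} (j : Fin n → ℝ) (α : Fin (n + 1) → ℝ) : ℝ → ℝ := fun t =>
  α ⟨(Finset.univ.filter fun i => j i < t).card,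
      Nat.lt_succ_of_le ((Finset.card_filter_le _ _).trans (by simp))⟩

/-- The jump locations together with the endpoints `0` and `1`. -/
def jext {n : ℕ} (j : Fin (n + 1) → ℝ) : Fin (n + 3) → ℝ :=
  Fin.cons (0 : ℝ) (Fin.snoc j (1 : ℝ))

/-- The minimal length `l_min` of the intervals of constancy (inside `[0,1]`). -/
def lmin {n : ℕ} (j : Fin (n + 1) → ℝ) : ℝ :=
  Finset.univ.inf' Finset.univ_nonempty
    fun i : Fin (n + 2) => jext j i.succ - jext j i.castSucc

/-- The minimal jump height `h_min`. -/
def hjumpMin {n : ℕ} (α : Fin (n + 2) → ℝ) : ℝ :=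
  Finset.univ.inf' Finset.univ_nonempty fun i : Fin (n + 1) => |α i.succ - α i.castSucc|

/-- The maximal jump height `h_max`. -/
def hjumpMax {n : ℕ} (α : Fin (n + 2) → ℝ) : ℝ :=
  Finset.univ.sup' Finset.univ_nonempty fun i : Fin (n + 1) => |α i.succ - α i.castSucc|

/-- The (real-valued) `L¹`-Potts value `γ·J(u) + ‖u − f‖₁` for piecewise constant `u`. -/
def PottsVal (γ : ℝ) (f u : ℝ → ℝ) : ℝ := γ * (jumps u : ℝ) + L1dist u f

/-!
Call the data `f` flat at a point where it is locally constant; `K * g` is flat off the intervals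
`[j i - κ, j i + κ]`. A single jump `z` of `v` at which `f` is flat can be moved out of the way.
Take the largest interval `(p, q)` around `z` in which `f` is flat and `v` has no other jump. There
`f` equals a constant `c`, while `v` has one value on `(p, z)` and another on `(z, q)`. Extending
whichever of the two is closer to `c` over the whole of `(p, q)` does not increase the distance to
`f`, and it moves the jump from `z` to `p` or `q`. This end point is another jump of `v`, an end
point of `[0, 1]`, or a point where `f` need not be flat, so the number of jumps at which `f` is
flat drops by one, the total number of jumps does not grow, and induction finishes the proof.
-/

section LocallyConstant

open scoped Topology

lemma eventually_mem_iff_of_notMem_frontier {X : Type*} [TopologicalSpace X] {S : Set X} {x : X}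
    (hx : x ∉ frontier S) : ∀ᶠ y in 𝓝 x, (y ∈ S ↔ x ∈ S) := by
  by_cases hxS : x ∈ S
  · have hint := (mem_interior_iff_notMem_frontier hxS).2 hx
    filter_upwards [mem_interior_iff_mem_nhds.1 hint] with y hy using iff_of_true hy hxS
  · have hint := (mem_interior_iff_notMem_frontier (s := Sᶜ) hxS).2 (frontier_compl S ▸ hx)
    filter_upwards [mem_interior_iff_mem_nhds.1 hint] with y hy using iff_of_false hy hxS

/-- `v` is locally constant at every point of `U`. For a piecewise constant `v`, the complement
of `U` plays the role of the set of jump locations; if `U` is not open, the neighbourhoods are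
still taken in the whole space. -/
def IsLocallyConstantOn {X Y : Type*} [TopologicalSpace X] (v : X → Y) (U : Set X) : Prop :=
  ∀ x ∈ U, ∀ᶠ y in 𝓝 x, v y = v x

namespace IsLocallyConstantOn

variable {X Y : Type*} [TopologicalSpace X] {v : X → Y} {U V S O : Set X}

lemma mono (hv : IsLocallyConstantOn v V) (hUV : U ⊆ V) : IsLocallyConstantOn v U :=
  fun x hx => hv x (hUV hx)

lemma apply_eq_of_isPreconnected (hv : IsLocallyConstantOn v U) (hS : IsPreconnected S)
    (hSU : S ⊆ U) {x y : X} (hx : x ∈ S) (hy : y ∈ S) : v x = v y :=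
  eq_of_germ_isConstant_on (fun z hz => ⟨v z, hv z (hSU hz)⟩) hS hx hy

lemma piecewise_const [∀ x, Decidable (x ∈ S)] (hv : IsLocallyConstantOn v U) (hO : IsOpen O)
    {d : Y} (hd : ∀ x ∈ O \ S, v x = d) :
    IsLocallyConstantOn (S.piecewise (fun _ => d) v) ((U \ frontier S) ∪ O) := by
  have hw : ∀ x ∈ O, S.piecewise (fun _ => d) v x = d := fun x hx => by
    by_cases hxS : x ∈ S
    · exact S.piecewise_eq_of_mem _ _ hxS
    · rw [S.piecewise_eq_of_notMem _ _ hxS, hd x ⟨hx, hxS⟩]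
  rintro x (⟨hxU, hxS⟩ | hxO)
  · filter_upwards [hv x hxU, eventually_mem_iff_of_notMem_frontier hxS] with y hvy hyS
    simp only [Set.piecewise, hyS, hvy]
  · filter_upwards [hO.mem_nhds hxO] with y hy
    rw [hw y hy, hw x hxO]

lemma piecewise_const_insert_sdiff [∀ x, Decidable (x ∈ S)] {F : Set X}
    (hv : IsLocallyConstantOn v (U \ F)) (hO : IsOpen O) {z e : X} (hz : z ∈ O)
    (hS : frontier S = {z, e}) {d : Y} (hd : ∀ x ∈ O \ S, v x = d) :
    IsLocallyConstantOn (S.piecewise (fun _ => d) v) (U \ insert e (F \ {z})) := by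
  refine (hv.piecewise_const hO hd).mono fun x ⟨hxU, hx⟩ => ?_
  rcases eq_or_ne x z with rfl | hxz
  · exact Or.inr hz
  · exact Or.inl ⟨⟨hxU, by grind⟩, by grind⟩

end IsLocallyConstantOn

variable {α Y : Type*} [ConditionallyCompleteLinearOrder α] [TopologicalSpace α] [OrderTopology α]

lemma exists_Ioo_subset_of_isOpen {U : Set α} (hU : IsOpen U) {a b z : α} (hUab : U ⊆ Ioo a b)
    (hz : z ∈ U) : ∃ p q, z ∈ Ioo p q ∧ Ioo p q ⊆ U ∧ p ∉ U ∧ q ∉ U := by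
  have haU : a ∉ U := fun h => lt_irrefl a (hUab h).1
  have hbU : b ∉ U := fun h => lt_irrefl b (hUab h).2
  have hp : sSup (Uᶜ ∩ Iic z) ∈ Uᶜ ∩ Iic z :=
    (hU.isClosed_compl.inter isClosed_Iic).csSup_mem ⟨a, haU, (hUab hz).1.le⟩
      ⟨z, fun _ h => h.2⟩
  have hq : sInf (Uᶜ ∩ Ici z) ∈ Uᶜ ∩ Ici z :=
    (hU.isClosed_compl.inter isClosed_Ici).csInf_mem ⟨b, hbU, (hUab hz).2.le⟩
      ⟨z, fun _ h => h.2⟩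
  refine ⟨sSup (Uᶜ ∩ Iic z), sInf (Uᶜ ∩ Ici z), ⟨hp.2.lt_of_ne ?_, hq.2.lt_of_ne ?_⟩,
    fun y hy => ?_, hp.1, hq.1⟩
  · exact (ne_of_mem_of_not_mem hz hp.1).symm
  · exact ne_of_mem_of_not_mem hz hq.1
  · by_contra hyU
    rcases le_total y z with hyz | hzy
    · exact hy.1.not_ge (le_csSup ⟨z, fun _ h => h.2⟩ ⟨hyU, hyz⟩)
    · exact hy.2.not_ge (csInf_le ⟨z, fun _ h => h.2⟩ ⟨hyU, hzy⟩)

variable [DenselyOrdered α] [NoMinOrder α] [NoMaxOrder α] [PseudoMetricSpace Y] {f v : α → Y}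

lemma IsLocallyConstantOn.exists_move_jump {U F : Set α} (hv : IsLocallyConstantOn v (U \ F))
    {p z q : α} (hz : z ∈ Ioo p q) (hvz : IsLocallyConstantOn v (Ioo p q \ {z}))
    (hf : IsLocallyConstantOn f (Ioo p q)) :
    ∃ e ∈ ({p, q} : Set α), ∃ w : α → Y, IsLocallyConstantOn w (U \ insert e (F \ {z})) ∧
      ∀ t ≠ z, dist (w t) (f t) ≤ dist (v t) (f t) := by
  obtain ⟨l, hl⟩ := exists_between hz.1
  obtain ⟨r, hr⟩ := exists_between hz.2
  have hvl : ∀ t ∈ Ioo p z, v t = v l := fun t ht =>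
    hvz.apply_eq_of_isPreconnected isPreconnected_Ioo
      (fun s hs => ⟨⟨hs.1, hs.2.trans hz.2⟩, hs.2.ne⟩) ht hl
  have hvr : ∀ t ∈ Ioo z q, v t = v r := fun t ht =>
    hvz.apply_eq_of_isPreconnected isPreconnected_Ioo
      (fun s hs => ⟨⟨hz.1.trans hs.1, hs.2⟩, hs.1.ne'⟩) ht hr
  have hfz : ∀ t ∈ Ioo p q, f t = f z := fun t ht =>
    hf.apply_eq_of_isPreconnected isPreconnected_Ioo subset_rfl ht hz
  rcases le_total (dist (v l) (f z)) (dist (v r) (f z)) with hlr | hrl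
  · refine ⟨q, by simp, (Ico z q).piecewise (fun _ => v l) v,
      hv.piecewise_const_insert_sdiff isOpen_Ioo hz (frontier_Ico hz.2) fun t ht => ?_,
      fun t htz => ?_⟩
    · exact hvl t ⟨ht.1.1, not_le.1 fun h => ht.2 ⟨h, ht.1.2⟩⟩
    · simp only [Set.piecewise]
      split_ifs with ht
      · rwa [hfz t ⟨hz.1.trans_le ht.1, ht.2⟩, hvr t ⟨ht.1.lt_of_ne' htz, ht.2⟩]
      · rfl
  · refine ⟨p, by simp, (Ioc p z).piecewise (fun _ => v r) v,
      hv.piecewise_const_insert_sdiff isOpen_Ioo hz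
        ((frontier_Ioc hz.1).trans (pair_comm p z)) fun t ht => ?_,
      fun t htz => ?_⟩
    · exact hvr t ⟨not_le.1 fun h => ht.2 ⟨ht.1.1, h⟩, ht.1.2⟩
    · simp only [Set.piecewise]
      split_ifs with ht
      · rwa [hfz t ⟨ht.1, ht.2.trans_lt hz.2⟩, hvl t ⟨ht.1, ht.2.lt_of_ne htz⟩]
      · rfl

lemma IsLocallyConstantOn.exists_jumps_disjoint {U W : Set α} {F : Finset α}
    (hv : IsLocallyConstantOn v (U \ F)) (hW : IsOpen W) (hWU : W ⊆ U) {a b : α}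
    (hWab : W ⊆ Ioo a b) (hf : IsLocallyConstantOn f W) :
    ∃ (w : α → Y) (G : Finset α), IsLocallyConstantOn w (U \ G) ∧ G.card ≤ F.card ∧
      (∀ x ∈ G, x ∉ W) ∧ ∀ᶠ t in cofinite, dist (w t) (f t) ≤ dist (v t) (f t) := by
  induction hN : (F.filter (· ∈ W)).card using Nat.strong_induction_on generalizing v F with
  | _ N ih =>
  subst hN
  by_cases hFW : ∀ x ∈ F, x ∉ W
  · exact ⟨v, F, hv, le_rfl, hFW, Eventually.of_forall fun _ => le_rfl⟩
  push Not at hFW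
  obtain ⟨z, hzF, hzW⟩ := hFW
  obtain ⟨p, q, hz, hpqO, hp, hq⟩ := exists_Ioo_subset_of_isOpen
    (hW.sdiff (F.erase z).finite_toSet.isClosed) (sdiff_subset.trans hWab) (z := z)
    ⟨hzW, by simp⟩
  obtain ⟨e, he, w, hw, hwv⟩ := hv.exists_move_jump hz
    (hv.mono fun x hx => ⟨hWU (hpqO hx.1).1, fun hxF => (hpqO hx.1).2 (by simp_all)⟩)
    (hf.mono (hpqO.trans sdiff_subset))
  have heW : e ∈ W → e ∈ F.erase z := by
    rcases he with rfl | rfl <;> intro heW <;> by_contra heF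
    exacts [hp ⟨heW, heF⟩, hq ⟨heW, heF⟩]
  have hlt : ((insert e (F.erase z)).filter (· ∈ W)).card < (F.filter (· ∈ W)).card := by
    refine Finset.card_lt_card ⟨fun x hx => ?_, fun h => ?_⟩
    · grind
    · have := h (Finset.mem_filter.2 ⟨hzF, hzW⟩)
      grind
  obtain ⟨w', G, hw', hcard, hG, hw'w⟩ := ih _ hlt (by simpa using hw) rfl
  refine ⟨w', G, hw', hcard.trans ?_, hG, ?_⟩
  · grind
  · filter_upwards [hw'w, (finite_singleton z).compl_mem_cofinite] with t ht htz using
      ht.trans (hwv t htz)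

end LocallyConstant

section StepFunctions

variable {m : ℕ} {x : Fin (m + 1) → ℝ} {a : Fin m → ℝ}

lemma stepF_eq_of_mem_Ioo (hx : StrictMono x) {l : Fin m} {t : ℝ}
    (ht : t ∈ Ioo (x l.castSucc) (x l.succ)) : stepF x a t = a l := by
  rw [stepF, Finset.sum_eq_single l, indicator_of_mem ht]
  · intro k _ hkl
    refine indicator_of_notMem (fun hk => hkl ?_) _
    have h₁ := hx.lt_iff_lt.1 (hk.1.trans ht.2)
    have h₂ := hx.lt_iff_lt.1 (ht.1.trans hk.2)
    grind
  · simp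

lemma isLocallyConstantOn_stepF (hx : StrictMono x) (a : Fin m → ℝ) :
    IsLocallyConstantOn (stepF x a) (range x)ᶜ := by
  intro t ht
  have hIoo : ∀ l : Fin m, t ∉ frontier (Ioo (x l.castSucc) (x l.succ)) := fun l hl => by
    rcases frontier_Ioo (hx l.castSucc_lt_succ) ▸ hl with rfl | rfl
    exacts [ht (mem_range_self _), ht (mem_range_self _)]
  filter_upwards [eventually_all.2 fun l => eventually_mem_iff_of_notMem_frontier (hIoo l)]
    with s hs
  simp only [stepF, indicator, hs]

instance : IsFiniteMeasure mu01 := by unfold mu01; infer_instance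

lemma integrable_stepF (x : Fin (m + 1) → ℝ) (a : Fin m → ℝ) : Integrable (stepF x a) mu01 :=
  integrable_finsetSum _ fun l _ => (integrable_const (a l)).indicator measurableSet_Ioo

lemma exists_mem_Ioo_of_notMem_range {t : ℝ} (h₀ : x 0 < t) (h₁ : t < x (Fin.last m))
    (ht : t ∉ range x) : ∃ l : Fin m, t ∈ Ioo (x l.castSucc) (x l.succ) := by
  by_contra! hgap
  have hlt : ∀ i, x i < t := fun i => by
    induction i using Fin.induction with
    | zero => exact h₀
    | succ i ih =>
      exact (not_lt.1 fun h => hgap i ⟨ih, h⟩).lt_of_ne fun h => ht ⟨_, h⟩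
  exact (hlt (Fin.last m)).not_gt h₁

lemma exists_strictMono_range_eq {α : Type*} [LinearOrder α] {F : Finset α} {a b : α}
    (hab : a < b) (hF : ∀ y ∈ F, y ∈ Ioo a b) :
    ∃ x : Fin (F.card + 2) → α, StrictMono x ∧ x 0 = a ∧ x (Fin.last _) = b ∧
      range x = insert a (insert b ↑F) := by
  have hb : b ∉ F := fun h => (hF b h).2.false
  have ha : a ∉ insert b F := by grind
  have hcard : (insert a (insert b F)).card = F.card + 2 := by
    rw [Finset.card_insert_of_notMem ha, Finset.card_insert_of_notMem hb]
  set x := (insert a (insert b F)).orderEmbOfFin hcard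
  have hrange : range x = insert a (insert b ↑F) :=
    (Finset.range_orderEmbOfFin _ hcard).trans (by simp)
  have hx : ∀ i, a ≤ x i ∧ x i ≤ b := fun i => by
    have := hrange ▸ mem_range_self i
    grind
  obtain ⟨i, hi⟩ : a ∈ range x := by simp [hrange]
  obtain ⟨k, hk⟩ : b ∈ range x := by simp [hrange]
  exact ⟨x, x.strictMono, ((x.monotone (Fin.zero_le i)).trans_eq hi).antisymm (hx 0).1,
    (hx _).2.antisymm (hk.symm.trans_le (x.monotone (Fin.le_last k))), hrange⟩

lemma IsLocallyConstantOn.exists_isPCRep {v : ℝ → ℝ} {F : Finset ℝ}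
    (hv : IsLocallyConstantOn v (Ioo 0 1 \ F)) (hF : ∀ y ∈ F, y ∈ Ioo (0 : ℝ) 1) :
    ∃ (x : Fin (F.card + 2) → ℝ) (a : Fin (F.card + 1) → ℝ), IsPCRep v x a ∧
      ∀ i, i ≠ 0 → i ≠ Fin.last _ → x i ∈ F := by
  obtain ⟨x, hx, hx0, hx1, hrange⟩ := exists_strictMono_range_eq zero_lt_one hF
  refine ⟨x, fun l => v ((x l.castSucc + x l.succ) / 2), ⟨hx, hx0, hx1, ?_⟩, fun i hi0 hi1 => ?_⟩
  · have hgap : ∀ l : Fin (F.card + 1), Ioo (x l.castSucc) (x l.succ) ⊆ Ioo 0 1 \ F := by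
      refine fun l t ht => ⟨⟨?_, ?_⟩, fun htF => ?_⟩
      · exact hx0.symm.trans_lt ((hx.monotone (Fin.zero_le _)).trans_lt ht.1)
      · exact ht.2.trans_le ((hx.monotone (Fin.le_last _)).trans_eq hx1)
      · obtain ⟨i, rfl⟩ : t ∈ range x := by simp [hrange, Finset.mem_coe.1 htF]
        have h₁ := hx.lt_iff_lt.1 ht.1
        have h₂ := hx.lt_iff_lt.1 ht.2
        grind
    have hne : ∀ᵐ t ∂mu01, t ∉ range x :=
      ae_restrict_of_ae ((finite_range x).countable.ae_notMem _)
    filter_upwards [hne, ae_restrict_mem measurableSet_Icc] with t ht htI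
    obtain ⟨l, hl⟩ := exists_mem_Ioo_of_notMem_range
      ((hx0.trans_le htI.1).lt_of_ne fun h => ht ⟨_, h⟩)
      ((htI.2.trans_eq hx1.symm).lt_of_ne fun h => ht ⟨_, h.symm⟩) ht
    have hmid : (x l.castSucc + x l.succ) / 2 ∈ Ioo (x l.castSucc) (x l.succ) := by
      have := hl.1.trans hl.2
      constructor <;> linarith
    rw [stepF_eq_of_mem_Ioo hx hl]
    exact hv.apply_eq_of_isPreconnected isPreconnected_Ioo (hgap l) hl hmid
  · have hxi : x i ∈ insert 0 (insert 1 (F : Set ℝ)) := hrange ▸ mem_range_self i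
    have h0 : x i ≠ 0 := hx0 ▸ hx.injective.ne hi0
    have h1 : x i ≠ 1 := hx1 ▸ hx.injective.ne hi1
    grind

lemma IsPC.exists_isPCRep_jumps {u : ℝ → ℝ} (hu : IsPC u) :
    ∃ (x : Fin (jumps u + 2) → ℝ) (a : Fin (jumps u + 1) → ℝ), IsPCRep u x a := by
  refine Nat.sInf_mem (s := {k : ℕ | ∃ (x : Fin (k + 2) → ℝ) (a : Fin (k + 1) → ℝ),
    IsPCRep u x a}) ?_
  obtain ⟨_ | k, x, a, hrep⟩ := hu
  · exact absurd (hrep.2.1.symm.trans hrep.2.2.1) zero_ne_one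
  · exact ⟨k, x, a, hrep⟩

lemma IsPC.exists_finset_jumps {u : ℝ → ℝ} (hu : IsPC u) :
    ∃ (v : ℝ → ℝ) (F : Finset ℝ), u =ᵐ[mu01] v ∧ Integrable v mu01 ∧
      IsLocallyConstantOn v (Ioo 0 1 \ F) ∧ F.card ≤ jumps u := by
  obtain ⟨x, a, hx, hx0, hx1, hux⟩ := hu.exists_isPCRep_jumps
  refine ⟨stepF x a, ((Finset.univ.image x).erase 0).erase 1, hux, integrable_stepF x a,
    (isLocallyConstantOn_stepF hx a).mono fun t ht => ?_, ?_⟩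
  · grind
  · rw [Finset.card_erase_of_mem, Finset.card_erase_of_mem,
      Finset.card_image_of_injective _ hx.injective, Finset.card_fin]
    · rfl
    · exact Finset.mem_image.2 ⟨0, Finset.mem_univ _, hx0⟩
    · exact Finset.mem_erase.2 ⟨one_ne_zero, Finset.mem_image.2 ⟨_, Finset.mem_univ _, hx1⟩⟩

lemma IsLocallyConstantOn.isPCIn_and_jumps_le {v : ℝ → ℝ} {F : Finset ℝ} {S : Set ℝ}
    (hv : IsLocallyConstantOn v (Ioo 0 1 \ F)) (hF : ∀ x ∈ F, x ∈ Ioo (0 : ℝ) 1 → x ∈ S) :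
    IsPCIn v S ∧ jumps v ≤ F.card := by
  obtain ⟨x, a, hrep, hx⟩ := IsLocallyConstantOn.exists_isPCRep (v := v)
    (F := F.filter (· ∈ Ioo (0 : ℝ) 1)) (hv.mono (by grind)) (by grind)
  exact ⟨⟨_, x, a, hrep, by grind⟩,
    (Nat.sInf_le ⟨x, a, hrep⟩ : jumps v ≤ _).trans (Finset.card_filter_le _ _)⟩

end StepFunctions

section Convolution

open scoped Topology

lemma isLocallyConstantOn_convK {K g : ℝ → ℝ} {S V : Set ℝ} (hS : IsCompact S)
    (hK : Function.support K ⊆ S) (hg : IsLocallyConstantOn g V) :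
    IsLocallyConstantOn (convK K g) {t | ∀ r ∈ S, t - r ∈ V} := by
  intro t ht
  have hgt : ∀ᶠ s in 𝓝 t, ∀ r ∈ S, g (s - r) = g (t - r) := by
    refine hS.eventually_forall_of_forall_eventually fun r hr => ?_
    have hgr : ∀ᶠ y in 𝓝 (t - r), g y = g (t - r) := hg _ (ht r hr)
    have hsub : Tendsto (fun y : ℝ × ℝ => y.1 - y.2) (𝓝 (t, r)) (𝓝 (t - r)) :=
      (continuous_fst.sub continuous_snd).tendsto (t, r)
    have hsub' : Tendsto (fun y : ℝ × ℝ => t - y.2) (𝓝 (t, r)) (𝓝 (t - r)) :=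
      (continuous_const.sub continuous_snd).tendsto (t, r)
    filter_upwards [hsub.eventually hgr, hsub'.eventually hgr] with y h h' using h.trans h'.symm
  filter_upwards [hgt] with s hs
  refine integral_congr_ae (ae_of_all _ fun r => ?_)
  by_cases hr : K r = 0
  · simp only [hr, zero_mul]
  · simp only [hs r (hK hr)]

lemma integrable_convK {K g : ℝ → ℝ} (hK : Integrable K) (hg : Measurable g) {M : ℝ}
    (hgM : ∀ t, |g t| ≤ M) (μ : Measure ℝ) [IsFiniteMeasure μ] : Integrable (convK K g) μ := by
  have hmeas : AEStronglyMeasurable (fun z : ℝ × ℝ => K z.2 * g (z.1 - z.2)) (μ.prod volume) :=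
    hK.1.comp_snd.mul (hg.comp (measurable_fst.sub measurable_snd)).aestronglyMeasurable
  refine .of_bound hmeas.integral_prod_right' (∫ s, |K s| * M) (ae_of_all _ fun t => ?_)
  refine norm_integral_le_of_norm_le (hK.abs.mul_const M) (ae_of_all _ fun s => ?_)
  rw [Real.norm_eq_abs, abs_mul]
  exact mul_le_mul_of_nonneg_left (hgM _) (abs_nonneg _)

variable {n : ℕ} (j : Fin n → ℝ) (α : Fin (n + 1) → ℝ)

lemma measurable_stepOn : Measurable (stepOn j α) := by
  refine (measurable_of_countable α).comp (Monotone.measurable fun s t hst => ?_)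
  exact Fin.mk_le_mk.2 <| Finset.card_le_card <|
    Finset.monotone_filter_right _ fun i _ (hi : j i < s) => hi.trans_le hst

lemma abs_stepOn_le (t : ℝ) : |stepOn j α t| ≤ ‖α‖ := norm_le_pi_norm α _

lemma isLocallyConstantOn_stepOn : IsLocallyConstantOn (stepOn j α) (range j)ᶜ := by
  intro t ht
  have hIoi : ∀ i, t ∉ frontier (Ioi (j i)) := fun i hi =>
    ht ⟨i, (frontier_Ioi.subset hi).symm⟩
  filter_upwards [eventually_all.2 fun i => eventually_mem_iff_of_notMem_frontier (hIoi i)]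
    with s hs
  simp only [mem_Ioi] at hs
  simp only [stepOn, hs]

lemma isLocallyConstantOn_convK_stepOn {K : ℝ → ℝ} {κ : ℝ}
    (hK : Function.support K ⊆ Icc (-κ) κ) :
    IsLocallyConstantOn (convK K (stepOn j α)) (⋃ i, Icc (j i - κ) (j i + κ))ᶜ := by
  refine (isLocallyConstantOn_convK isCompact_Icc hK (isLocallyConstantOn_stepOn j α)).mono ?_
  rintro t ht r hr ⟨i, hi⟩
  exact ht (mem_iUnion.2 ⟨i, by linarith [hr.1], by linarith [hr.2]⟩)

end Convolution

section Potts

variable {γ : ℝ} {f u : ℝ → ℝ} {C : Set ℝ}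

lemma IsPCIn.isPC (hu : IsPCIn u C) : IsPC u :=
  let ⟨m, x, a, hrep, _⟩ := hu
  ⟨m, x, a, hrep⟩

lemma pottsVal_nonneg (hγ : 0 ≤ γ) (f u : ℝ → ℝ) : 0 ≤ PottsVal γ f u :=
  add_nonneg (mul_nonneg hγ (Nat.cast_nonneg _)) (integral_nonneg fun _ => abs_nonneg _)

lemma IsPC.exists_isPCIn_pottsVal_le (hC : IsClosed C)
    (hf : IsLocallyConstantOn f (Ioo 0 1 \ C)) (hfint : Integrable f mu01) (hγ : 0 ≤ γ)
    (hu : IsPC u) : ∃ w, IsPCIn w C ∧ PottsVal γ f w ≤ PottsVal γ f u := by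
  obtain ⟨v, F, huv, hvint, hv, hF⟩ := hu.exists_finset_jumps
  obtain ⟨w, G, hw, hGF, hGC, hwv⟩ :=
    hv.exists_jumps_disjoint (isOpen_Ioo.sdiff hC) sdiff_subset sdiff_subset hf
  obtain ⟨hwC, hwG⟩ := hw.isPCIn_and_jumps_le (S := C) fun x hxG hx => by
    by_contra hxC
    exact hGC x hxG ⟨hx, hxC⟩
  have hle : ∀ᵐ t ∂mu01, |w t - f t| ≤ |v t - f t| :=
    ae_restrict_of_ae (ae_iff.2 (Set.Finite.measure_zero hwv _))
  have hdist : L1dist w f ≤ L1dist u f := calc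
    L1dist w f ≤ L1dist v f :=
      integral_mono_of_nonneg (ae_of_all _ fun _ => abs_nonneg _) (hvint.sub hfint).abs hle
    _ = L1dist u f := integral_congr_ae (huv.mono fun t ht => by simp only [ht])
  have hjumps : jumps w ≤ jumps u := hwG.trans (hGF.trans hF)
  exact ⟨w, hwC, add_le_add (mul_le_mul_of_nonneg_left (Nat.cast_le.2 hjumps) hγ) hdist⟩

theorem statement_13_general (hC : IsClosed C)
    (hf : IsLocallyConstantOn f (Ioo 0 1 \ C)) (hfint : Integrable f mu01) (hγ : 0 ≤ γ)
    {u₀ : ℝ → ℝ} (hu₀ : IsPC u₀) :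
    (∃ u₁, IsPCIn u₁ C ∧ PottsVal γ f u₁ ≤ PottsVal γ f u₀) ∧
      sInf (PottsVal γ f '' {u | IsPC u}) = sInf (PottsVal γ f '' {u | IsPCIn u C}) := by
  have improve : ∀ u, IsPC u → ∃ w, IsPCIn w C ∧ PottsVal γ f w ≤ PottsVal γ f u :=
    fun u hu => hu.exists_isPCIn_pottsVal_le hC hf hfint hγ
  have hbdd : ∀ A : Set (ℝ → ℝ), BddBelow (PottsVal γ f '' A) := fun A =>
    ⟨0, forall_mem_image.2 fun u _ => pottsVal_nonneg hγ f u⟩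
  obtain ⟨u₁, hu₁, hle⟩ := improve u₀ hu₀
  refine ⟨⟨u₁, hu₁, hle⟩, le_antisymm ?_ ?_⟩
  · exact csInf_le_csInf (hbdd _) ⟨_, u₁, hu₁, rfl⟩ (image_mono fun u hu => hu.isPC)
  · refine le_csInf ⟨_, u₀, hu₀, rfl⟩ (forall_mem_image.2 fun u hu => ?_)
    obtain ⟨w, hw, hwu⟩ := improve u hu
    exact csInf_le_of_le (hbdd _) ⟨w, hw, rfl⟩ hwu

end Potts

theorem statement_13
    (n : ℕ) (j : Fin (n + 1) → ℝ) (α : Fin (n + 2) → ℝ)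
    (hj : StrictMono j) (hj0 : 0 < j 0) (hj1 : j (Fin.last n) < 1)
    (hadj : ∀ i : Fin (n + 1), α i.castSucc ≠ α i.succ)
    (K : ℝ → ℝ) (κ : ℝ) (hκ : 0 < κ)
    (hKint : Integrable K) (hKpos : ∀ x, 0 ≤ K x)
    (hKsym : ∀ x, K (-x) = K x) (hKnorm : (∫ x, K x) = 1)
    (hKsupp : Function.support K ⊆ Set.Icc (-κ) κ)
    (hκl : κ ≤ lmin j / 6)
    (γ : ℝ) (hγ : 0 < γ)
    (u₀ : ℝ → ℝ) (hu₀ : IsPC u₀) :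
    (∃ u₁ : ℝ → ℝ,
      IsPCIn u₁ (⋃ i : Fin (n + 1), Set.Icc (j i - κ) (j i + κ)) ∧
      PottsVal γ (convK K (stepOn j α)) u₁ ≤ PottsVal γ (convK K (stepOn j α)) u₀) ∧
    sInf (PottsVal γ (convK K (stepOn j α)) '' {u : ℝ → ℝ | IsPC u}) =
      sInf (PottsVal γ (convK K (stepOn j α)) ''
        {u : ℝ → ℝ | IsPCIn u (⋃ i : Fin (n + 1), Set.Icc (j i - κ) (j i + κ))}) :=
  statement_13_general (isClosed_iUnion_of_finite fun _ => isClosed_Icc)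
    ((isLocallyConstantOn_convK_stepOn j α hKsupp).mono fun _ ht => ht.2)
    (integrable_convK hKint (measurable_stepOn j α) (abs_stepOn_le j α) mu01) hγ.le hu₀
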